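/- Let (R, 𝔪, k) be a commutative noetherian local ring such that every finitely generated R-module of finite length has finite AB-dimension. Then every maximal Cohen–Macaulay finitely generated R-module X (i.e. one with depth_R X = dim R) has finite AB-dimension. -/

import Mathlib

/-!
The two parts of `abdim R X` are bounded separately.

*G-dimension.* The residue field `k` has finite length, so its G-dimension is at most some `g` and
`Ext^i(k, R) = 0` for `i > g` (`ev_of_gdimLE`). Noetherian induction with Nakayama's lemma spreads
this vanishing to all finitely generated modules (`ev_of_ev_residueField`), so `R` is Gorenstein.
Over such a ring a module `M` with `Ext^i(M, R) = 0` for all `i > 0` is totally reflexive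
(`isTotallyReflexive_of_ev`): the sequences `0 → M* → F* → (ΩM)* → 0` shift degrees until
`Ext^i(M*, R)` vanishes too, and dualizing them once more gives biduality. Taking syzygies, every
finitely generated module has G-dimension at most `g` (`gdimLE_of_ev`).

*The invariant `P_R`.* If `X ≠ 0`, a regular sequence of length `depth X = dim R` cuts `X` down to a
module of finite length (`exists_isRegular_isArtinian`), for which `P_R` is finite by hypothesis.
For `x ∈ 𝔪` regular on `M`, the long exact sequence of `0 → M → M → M/xM → 0` and Nakayama's lemma
give `M^⊥ ⊆ (M/xM)^⊥` and show that `Ext^{n+1}(M/xM, N) = 0` forces `Ext^n(M, N) = 0`; hence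
finiteness of `P_R` ascends from `M/xM` to `M` (`PFinite.of_isRegular`).

All vanishing arguments use `CategoryTheory.Abelian.Ext`, which agrees in positive degrees with the
derived functor `Ext` of the statement (`extVanishes_succ_iff`).
-/

open CategoryTheory IsLocalRing

noncomputable section

universe u

variable (R : Type u) [CommRing R]

/-- The Ext group `Ext^n_R(M, N)` vanishes. -/
def ExtVanishes (M : Type u) [AddCommGroup M] [Module R M]
    (N : Type u) [AddCommGroup N] [Module R N] (n : ℕ) : Prop :=
  Subsingleton (((Ext R (ModuleCat.{u} R) n).obj
    (Opposite.op (ModuleCat.of R M))).obj (ModuleCat.of R N))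

/-- `N ∈ M^⊥`, i.e. `Ext^n_R(M,N) = 0` for all sufficiently large `n`. -/
def MemPerp (M : Type u) [AddCommGroup M] [Module R M]
    (N : Type u) [AddCommGroup N] [Module R N] : Prop :=
  ∃ d : ℕ, ∀ n ≥ d, ExtVanishes R M N n

/-- `P_R(M,N) = sup { n | Ext^n_R(M,N) ≠ 0 }`, an element of `{-∞} ∪ ℕ ∪ {∞}`;
it is `⊥ = -∞` when every `Ext^n_R(M,N)` vanishes. -/
def extP (M : Type u) [AddCommGroup M] [Module R M]
    (N : Type u) [AddCommGroup N] [Module R N] : WithBot ℕ∞ :=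
  sSup {x : WithBot ℕ∞ | ∃ n : ℕ, ¬ ExtVanishes R M N n ∧ x = (n : ℕ∞)}

/-- `P_R(M) = sup { P_R(M,N) | N ∈ M^⊥ }`, the sup being taken over all
finitely generated modules in `M^⊥`. -/
def extPsup (M : Type u) [AddCommGroup M] [Module R M] : WithBot ℕ∞ :=
  sSup {x : WithBot ℕ∞ | ∃ (N : Type u) (_ : AddCommGroup N) (_ : Module R N),
    Module.Finite R N ∧ MemPerp R M N ∧ x = extP R M N}

/-- A module `G` is totally reflexive if the biduality map `G → G**` is bijective and
`Ext^n_R(G,R) = 0 = Ext^n_R(G*,R)` for all `n > 0`. -/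
def IsTotallyReflexive (G : Type u) [AddCommGroup G] [Module R G] : Prop :=
  Function.Bijective (Module.Dual.eval R G) ∧
    (∀ n > 0, ExtVanishes R G R n) ∧ (∀ n > 0, ExtVanishes R (Module.Dual R G) R n)

/-- `G-dim_R M ≤ n`: there is a resolution of `M` of length `n` by finitely generated
totally reflexive modules. -/
def GdimLE : ℕ → ModuleCat.{u} R → Prop
  | 0, M => IsTotallyReflexive R M
  | n + 1, M => ∃ G : ModuleCat.{u} R, Module.Finite R G ∧ IsTotallyReflexive R G ∧
      ∃ f : G →ₗ[R] M, Function.Surjective f ∧ GdimLE n (ModuleCat.of R (LinearMap.ker f))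

/-- The G-dimension of `M`, as an element of `ℕ∞`. -/
def gdim (M : Type u) [AddCommGroup M] [Module R M] : ℕ∞ :=
  sInf {x : ℕ∞ | ∃ n : ℕ, GdimLE R n (ModuleCat.of R M) ∧ x = n}

/-- `pd_R M ≤ n`: there is a projective resolution of `M` of length `n` by finitely
generated projective modules. -/
def ProjDimLE : ℕ → ModuleCat.{u} R → Prop
  | 0, M => Module.Projective R M
  | n + 1, M => ∃ P : ModuleCat.{u} R, Module.Finite R P ∧ Module.Projective R P ∧
      ∃ f : P →ₗ[R] M, Function.Surjective f ∧ ProjDimLE n (ModuleCat.of R (LinearMap.ker f))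

/-- The projective dimension of `M`, as an element of `ℕ∞`. -/
def projdim (M : Type u) [AddCommGroup M] [Module R M] : ℕ∞ :=
  sInf {x : ℕ∞ | ∃ n : ℕ, ProjDimLE R n (ModuleCat.of R M) ∧ x = n}

/-- `injdim_R M ≤ n`: there is an injective resolution of `M` of length `n`. -/
def InjDimLE : ℕ → ModuleCat.{u} R → Prop
  | 0, M => Module.Injective R M
  | n + 1, M => ∃ I : ModuleCat.{u} R, Module.Injective R I ∧
      ∃ f : M →ₗ[R] I, Function.Injective f ∧
        InjDimLE n (ModuleCat.of R (I ⧸ LinearMap.range f))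

/-- `R` is Gorenstein: `R` has finite injective dimension as a module over itself. -/
def IsGorensteinRing : Prop := ∃ n : ℕ, InjDimLE R n (ModuleCat.of R R)

/-- `AB-dim_R M = sup { G-dim_R M, P_R(M) }`. -/
def abdim (M : Type u) [AddCommGroup M] [Module R M] : WithBot ℕ∞ :=
  max ((gdim R M : ℕ∞) : WithBot ℕ∞) (extPsup R M)

/-- The depth of `M`: the length of a maximal `M`-regular sequence contained in the
maximal ideal (expressed as the sup of lengths of such regular sequences). -/
def rdepth [IsLocalRing R] (M : Type u) [AddCommGroup M] [Module R M] : ℕ∞ :=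
  sSup {x : ℕ∞ | ∃ rs : List R, (∀ r ∈ rs, r ∈ maximalIdeal R) ∧
    RingTheory.Sequence.IsRegular M rs ∧ x = rs.length}

/-- `S` is a first syzygy `Ω M` of `M`: the kernel of a minimal free cover of `M`. -/
def IsSyzygyOf [IsLocalRing R] (S M : ModuleCat.{u} R) : Prop :=
  ∃ F : ModuleCat.{u} R, Module.Free R F ∧ Module.Finite R F ∧
    ∃ π : F →ₗ[R] M, Function.Surjective π ∧
      LinearMap.ker π ≤ (maximalIdeal R) • (⊤ : Submodule R F) ∧
      Nonempty (S ≃ₗ[R] LinearMap.ker π)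

/-- `S` is an `n`-th syzygy `Ω^n M` of `M`. -/
def IsNthSyzygyOf [IsLocalRing R] : ℕ → ModuleCat.{u} R → ModuleCat.{u} R → Prop
  | 0, S, M => Nonempty (S ≃ₗ[R] M)
  | n + 1, S, M => ∃ T : ModuleCat.{u} R, IsSyzygyOf R T M ∧ IsNthSyzygyOf n S T

end


/-! ### Vanishing of `Ext` groups -/

section ExtGroups

open scoped Pointwise

variable {R : Type u} [CommRing R]

/-- Vanishing of `Ext^n_R(M, N)` for the derived-category `Ext`, which comes with long exact
sequences; see `extVanishes_succ_iff` for the comparison with `ExtVanishes`. -/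
def EV (R : Type u) [CommRing R] (M : Type u) [AddCommGroup M] [Module R M]
    (N : Type u) [AddCommGroup N] [Module R N] (n : ℕ) : Prop :=
  Subsingleton (Abelian.Ext.{u} (ModuleCat.of R M) (ModuleCat.of R N) n)

variable {A B C : Type u} [AddCommGroup A] [Module R A] [AddCommGroup B] [Module R B]
  [AddCommGroup C] [Module R C] {N : Type u} [AddCommGroup N] [Module R N]

/-- In positive degrees both `Ext` groups are computed by the same projective resolution. -/
lemma extVanishes_succ_iff (n : ℕ) : ExtVanishes R A N (n + 1) ↔ EV R A N (n + 1) := by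
  let P := projectiveResolution (ModuleCat.of R A)
  -- exactness of `Hom(P, N)` in degree `n + 1`, spelled out on cocycles
  have h1 : ExtVanishes R A N (n + 1) ↔ ∀ f : P.complex.X (n + 1) ⟶ ModuleCat.of R N,
      P.complex.d (n + 2) (n + 1) ≫ f = 0 → ∃ g, P.complex.d (n + 1) n ≫ g = f := by
    rw [ExtVanishes, ← ModuleCat.isZero_iff_subsingleton,
      (P.isoExt (R := R) (n + 1) (ModuleCat.of R N)).isZero_iff,
      ← HomologicalComplex.exactAt_iff_isZero_homology,
      HomologicalComplex.exactAt_iff' _ n (n + 1) (n + 2) (by simp) (by simp),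
      ShortComplex.moduleCat_exact_iff]
    rfl
  have h2 : EV R A N (n + 1) ↔ ∀ f : P.complex.X (n + 1) ⟶ ModuleCat.of R N,
      P.complex.d (n + 2) (n + 1) ≫ f = 0 → ∃ g, P.complex.d (n + 1) n ≫ g = f := by
    constructor
    · intro h f hf
      have : Subsingleton (Abelian.Ext.{u} (ModuleCat.of R A) (ModuleCat.of R N) (n + 1)) := h
      exact (P.extMk_eq_zero_iff f (n + 2) rfl hf n rfl).1 (Subsingleton.elim _ _)
    · intro h
      refine subsingleton_of_forall_eq 0 fun α => ?_
      obtain ⟨f, hf, rfl⟩ := P.extMk_surjective α (n + 2) rfl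
      exact (P.extMk_eq_zero_iff f (n + 2) rfl hf n rfl).2 (h f hf)
  rw [h1, h2]

lemma extVanishes_iff_of_pos {n : ℕ} (hn : 0 < n) : ExtVanishes R A N n ↔ EV R A N n := by
  obtain ⟨m, rfl⟩ := Nat.exists_eq_succ_of_ne_zero hn.ne'
  exact extVanishes_succ_iff m

lemma shortExact_of_linearMaps {f : A →ₗ[R] B} {g : B →ₗ[R] C} (hf : Function.Injective f)
    (hg : Function.Surjective g) (hfg : Function.Exact f g) :
    (ShortComplex.mk (ModuleCat.ofHom f) (ModuleCat.ofHom g)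
      (by ext x; exact hfg.apply_apply_eq_zero x)).ShortExact where
  exact := (ShortComplex.ShortExact.moduleCat_exact_iff_function_exact _).mpr hfg
  mono_f := (ModuleCat.mono_iff_injective _).mpr hf
  epi_g := (ModuleCat.epi_iff_surjective _).mpr hg

lemma EV.of_equiv {n : ℕ} (h : EV R A N n) (e : A ≃ₗ[R] B) : EV R B N n := by
  have : Subsingleton (Abelian.Ext.{u} (ModuleCat.of R A) (ModuleCat.of R N) n) := h
  refine subsingleton_of_forall_eq 0 fun α => ?_
  have h1 : (Abelian.Ext.mk₀ e.toModuleIso.hom).comp α (zero_add n) = 0 := Subsingleton.elim _ _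
  have h2 := congrArg (fun β => (Abelian.Ext.mk₀ e.toModuleIso.inv).comp β (zero_add n)) h1
  rw [Abelian.Ext.comp_zero, Abelian.Ext.mk₀_comp_mk₀_assoc, Iso.inv_hom_id,
    Abelian.Ext.mk₀_id_comp] at h2
  exact h2

section ShortExact

variable {f : A →ₗ[R] B} {g : B →ₗ[R] C} (hf : Function.Injective f)
    (hg : Function.Surjective g) (hfg : Function.Exact f g)
include hf hg hfg

lemma EV.middle {n : ℕ} (hA : EV R A N n) (hC : EV R C N n) : EV R B N n := by
  have : Subsingleton (Abelian.Ext.{u} (ModuleCat.of R A) (ModuleCat.of R N) n) := hA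
  have : Subsingleton (Abelian.Ext.{u} (ModuleCat.of R C) (ModuleCat.of R N) n) := hC
  refine subsingleton_of_forall_eq 0 fun α => ?_
  obtain ⟨β, rfl⟩ := Abelian.Ext.contravariant_sequence_exact₂ (shortExact_of_linearMaps hf hg hfg)
    _ α (Subsingleton.elim (α := Abelian.Ext.{u} (ModuleCat.of R A) (ModuleCat.of R N) n) _ _)
  rw [Subsingleton.elim (α := Abelian.Ext.{u} (ModuleCat.of R C) (ModuleCat.of R N) n) β 0]
  simp

lemma EV.left {n : ℕ} (hB : EV R B N n) (hC : EV R C N (n + 1)) : EV R A N n := by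
  have : Subsingleton (Abelian.Ext.{u} (ModuleCat.of R B) (ModuleCat.of R N) n) := hB
  have : Subsingleton (Abelian.Ext.{u} (ModuleCat.of R C) (ModuleCat.of R N) (n + 1)) := hC
  refine subsingleton_of_forall_eq 0 fun α => ?_
  obtain ⟨β, rfl⟩ := Abelian.Ext.contravariant_sequence_exact₁ (shortExact_of_linearMaps hf hg hfg)
    _ α (add_comm 1 n)
    (Subsingleton.elim (α := Abelian.Ext.{u} (ModuleCat.of R C) (ModuleCat.of R N) (n + 1)) _ _)
  rw [Subsingleton.elim (α := Abelian.Ext.{u} (ModuleCat.of R B) (ModuleCat.of R N) n) β 0]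
  simp

lemma EV.right {n : ℕ} (hA : EV R A N n) (hB : EV R B N (n + 1)) : EV R C N (n + 1) := by
  have : Subsingleton (Abelian.Ext.{u} (ModuleCat.of R A) (ModuleCat.of R N) n) := hA
  have : Subsingleton (Abelian.Ext.{u} (ModuleCat.of R B) (ModuleCat.of R N) (n + 1)) := hB
  refine subsingleton_of_forall_eq 0 fun α => ?_
  obtain ⟨β, rfl⟩ := Abelian.Ext.contravariant_sequence_exact₃ (shortExact_of_linearMaps hf hg hfg)
    _ α
    (Subsingleton.elim (α := Abelian.Ext.{u} (ModuleCat.of R B) (ModuleCat.of R N) (n + 1)) _ _)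
    (add_comm 1 n)
  rw [Subsingleton.elim (α := Abelian.Ext.{u} (ModuleCat.of R A) (ModuleCat.of R N) n) β 0]
  simp

lemma EV.exists_extend (hC : EV R C N 1) (φ : A →ₗ[R] N) : ∃ ψ : B →ₗ[R] N, ψ ∘ₗ f = φ := by
  have : Subsingleton (Abelian.Ext.{u} (ModuleCat.of R C) (ModuleCat.of R N) 1) := hC
  obtain ⟨β, hβ⟩ := Abelian.Ext.contravariant_sequence_exact₁
    (shortExact_of_linearMaps hf hg hfg) _ (Abelian.Ext.mk₀ (ModuleCat.ofHom φ)) (add_zero 1)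
    (Subsingleton.elim (α := Abelian.Ext.{u} (ModuleCat.of R C) (ModuleCat.of R N) 1) _ _)
  obtain ⟨ψ, rfl⟩ := Abelian.Ext.addEquiv₀.symm.surjective β
  refine ⟨ψ.hom, ?_⟩
  rw [Abelian.Ext.addEquiv₀_symm_apply, Abelian.Ext.mk₀_comp_mk₀] at hβ
  have := (Abelian.Ext.mk₀_bijective _ _).1 hβ
  exact congrArg ModuleCat.Hom.hom this

end ShortExact

lemma EV.of_projective [Module.Projective R A] (n : ℕ) : EV R A N (n + 1) := by
  have : Projective (ModuleCat.of R A) := (IsProjective.iff_projective A).mp ‹_›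
  exact Abelian.Ext.subsingleton_of_projective _ _ n

lemma EV.of_projective_of_pos [Module.Projective R A] {n : ℕ} (hn : 0 < n) : EV R A N n := by
  obtain ⟨m, rfl⟩ := Nat.exists_eq_succ_of_ne_zero hn.ne'
  exact EV.of_projective m

lemma EV.of_subsingleton [Subsingleton A] (n : ℕ) : EV R A N n := by
  refine subsingleton_of_forall_eq 0 fun α => ?_
  have h0 : 𝟙 (ModuleCat.of R A) = 0 := (ModuleCat.isZero_of_subsingleton _).eq_of_src _ _
  rw [← Abelian.Ext.mk₀_id_comp α, h0]
  simp

/-- If `x ∈ 𝔪` is regular on `A`, then `x` acts surjectively on `Ext^n(A, N)` as soon as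
`Ext^{n+1}(A/xA, N) = 0`, and Nakayama's lemma applies. -/
lemma EV.of_quotSMulTop [IsLocalRing R] [IsNoetherianRing R] [Module.Finite R A]
    [Module.Finite R N] {x : R} (hx : x ∈ maximalIdeal R) (hreg : IsSMulRegular A x) {n : ℕ}
    (h : EV R (QuotSMulTop x A) N (n + 1)) : EV R A N n := by
  have : Subsingleton (Abelian.Ext.{u} (ModuleCat.of R (QuotSMulTop x A))
    (ModuleCat.of R N) (n + 1)) := h
  have hS : ((ModuleCat.of R A).smulShortComplex x).ShortExact :=
    IsSMulRegular.smulShortComplex_shortExact (M := ModuleCat.of R A) hreg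
  set E := Abelian.Ext.{u} (ModuleCat.of R A) (ModuleCat.of R N) n
  have htop : (⊤ : Submodule R E) ≤ maximalIdeal R • (⊤ : Submodule R E) := by
    intro α _
    obtain ⟨β, rfl⟩ := Abelian.Ext.contravariant_sequence_exact₁ hS _ α (add_comm 1 n)
      (Subsingleton.elim (α := Abelian.Ext.{u} (ModuleCat.of R (QuotSMulTop x A))
        (ModuleCat.of R N) (n + 1)) _ _)
    have key (γ : E) :
        (Abelian.Ext.mk₀ (x • 𝟙 (ModuleCat.of R A))).comp γ (zero_add n) = x • γ := by
      rw [Abelian.Ext.mk₀_smul, Abelian.Ext.smul_comp, Abelian.Ext.mk₀_id_comp]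
    exact (key β).symm ▸ Submodule.smul_mem_smul hx trivial
  have hbot : (⊤ : Submodule R E) = ⊥ :=
    Submodule.eq_bot_of_le_smul_of_le_jacobson_bot (maximalIdeal R) ⊤ Module.Finite.fg_top htop
      (IsLocalRing.maximalIdeal_le_jacobson _)
  exact (Submodule.subsingleton_iff R).mp (subsingleton_of_bot_eq_top hbot.symm)

/-- For `x` regular on `A`, this gives `A^⊥ ⊆ (A/xA)^⊥`. -/
lemma EV.quotSMulTop {x : R} (hreg : IsSMulRegular A x) {n : ℕ}
    (h0 : EV R A N n) (h1 : EV R A N (n + 1)) : EV R (QuotSMulTop x A) N (n + 1) :=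
  EV.right (f := LinearMap.lsmul R A x) (g := (x • (⊤ : Submodule R A)).mkQ) hreg
    (Submodule.mkQ_surjective _) (LinearMap.exact_lsmul_mkQ_smul_top A x) h0 h1

end ExtGroups

/-! ### Rings over which the residue field has finite G-dimension -/

section Gorenstein

variable {R : Type u} [CommRing R]

lemma ev_of_gdimLE (n : ℕ) (M : ModuleCat.{u} R) (hM : GdimLE R n M) :
    ∀ i > n, EV R M R i := by
  induction n generalizing M with
  | zero => exact fun i hi => (extVanishes_iff_of_pos hi).1 (hM.2.1 i hi)
  | succ n ih =>
    obtain ⟨G, _, hG, f, hf, hK⟩ := hM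
    intro i hi
    obtain ⟨j, rfl⟩ : ∃ j, i = j + 1 := ⟨i - 1, by omega⟩
    exact EV.right (f := (LinearMap.ker f).subtype) Subtype.val_injective hf
      f.exact_subtype_ker_map (ih _ hK j (by omega))
      ((extVanishes_succ_iff j).1 (hG.2.1 _ (by omega)))

lemma exists_gdimLE_of_gdim_lt_top {M : Type u} [AddCommGroup M] [Module R M]
    (h : gdim R M < ⊤) : ∃ n, GdimLE R n (ModuleCat.of R M) := by
  by_contra! hn
  have : {x : ℕ∞ | ∃ n : ℕ, GdimLE R n (ModuleCat.of R M) ∧ x = n} = ∅ := by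
    ext x
    simp [hn]
  rw [gdim, this, sInf_empty] at h
  exact lt_irrefl _ h

/-- Dualizing a short exact sequence whose cokernel has no `Ext^1` into `R`. -/
lemma dual_exact {A B C : Type u} [AddCommGroup A] [Module R A] [AddCommGroup B] [Module R B]
    [AddCommGroup C] [Module R C] {f : A →ₗ[R] B} {g : B →ₗ[R] C} (hf : Function.Injective f)
    (hg : Function.Surjective g) (hfg : Function.Exact f g) (hC : EV R C R 1) :
    Function.Injective g.dualMap ∧ Function.Surjective f.dualMap ∧
      Function.Exact g.dualMap f.dualMap := by
  refine ⟨LinearMap.dualMap_injective_of_surjective hg, fun φ => ?_, fun φ => ⟨fun h => ?_, ?_⟩⟩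
  · exact EV.exists_extend hf hg hfg hC φ
  · have hle : LinearMap.ker g ≤ LinearMap.ker φ := by
      intro b hb
      obtain ⟨a, rfl⟩ := (hfg b).1 hb
      exact LinearMap.congr_fun h a
    refine ⟨(LinearMap.ker g).liftQ φ hle ∘ₗ (g.quotKerEquivOfSurjective hg).symm.toLinearMap, ?_⟩
    ext b
    have : (g.quotKerEquivOfSurjective hg).symm (g b) = (LinearMap.ker g).mkQ b := by
      rw [LinearEquiv.symm_apply_eq]
      rfl
    simp [this]
  · rintro ⟨ψ, rfl⟩
    ext a
    simp [hfg.apply_apply_eq_zero a]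

variable [IsNoetherianRing R]

/-- Bass's theorem: vanishing of `Ext^i(k, R)` for `i > g` propagates to all finitely generated
modules. Noetherian induction on an ideal `J` annihilating `M` reduces to `M = R/p`; for
`p ≠ 𝔪` an element of `𝔪 ∖ p` is regular on `R/p`, and the quotient by it is annihilated by a
larger ideal. -/
lemma ev_of_ev_residueField [IsLocalRing R] (g : ℕ)
    (hk : ∀ i > g, EV R (ResidueField R) R i) (J : Ideal R) :
    ∀ (M : Type u) [AddCommGroup M] [Module R M] [Module.Finite R M],
      J ≤ Module.annihilator R M → ∀ i > g, EV R M R i := by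
  induction J using WellFoundedGT.induction with
  | ind J ih =>
  intro M _ _ hfin
  refine IsNoetherianRing.induction_on_isQuotientEquivQuotientPrime R hfin
    (motive := fun N _ _ _ => J ≤ Module.annihilator R N → ∀ i > g, EV R N R i) ?_ ?_ ?_
  · intro N _ _ _ _ _ i _
    exact EV.of_subsingleton i
  · intro N _ _ _ p e hJ i hi
    have hJp : J ≤ p.1 := by
      rw [e.annihilator_eq, Ideal.annihilator_quotient] at hJ
      exact hJ
    refine EV.of_equiv ?_ e.symm
    by_cases hp : p.1 = maximalIdeal R
    · exact EV.of_equiv (hk i hi) (Submodule.quotEquivOfEq _ _ hp.symm)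
    · obtain ⟨x, hx, hxp⟩ : ∃ x ∈ maximalIdeal R, x ∉ p.1 :=
        SetLike.not_le_iff_exists.1 fun hle =>
          hp (le_antisymm (le_maximalIdeal p.2.ne_top) hle)
      have hreg : IsSMulRegular (R ⧸ p.1) x := by
        refine isSMulRegular_iff_right_eq_zero_of_smul.2 fun m hm => ?_
        obtain ⟨r, rfl⟩ := Ideal.Quotient.mk_surjective m
        rw [Algebra.smul_def, Ideal.Quotient.algebraMap_eq, ← map_mul,
          Ideal.Quotient.eq_zero_iff_mem] at hm
        exact Ideal.Quotient.eq_zero_iff_mem.2 ((p.2.mem_or_mem hm).resolve_left hxp)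
      refine EV.of_quotSMulTop hx hreg (ih (J ⊔ Ideal.span {x}) ?_ _ ?_ (i + 1) (by omega))
      · refine lt_of_le_of_ne le_sup_left fun h => hxp (hJp ?_)
        rw [h]
        exact Ideal.mem_sup_right (Ideal.mem_span_singleton_self x)
      · refine sup_le ?_ ?_
        · refine hJp.trans ?_
          conv_lhs => rw [← Ideal.annihilator_quotient (I := p.1)]
          exact LinearMap.annihilator_le_of_surjective _ (Submodule.mkQ_surjective _)
        · rw [Ideal.span_singleton_le_iff_mem, Module.mem_annihilator]
          intro m
          obtain ⟨m, rfl⟩ := Submodule.mkQ_surjective _ m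
          rw [← map_smul, Submodule.mkQ_apply, Submodule.Quotient.mk_eq_zero]
          exact Submodule.smul_mem_pointwise_smul _ _ _ trivial
  · intro N₁ _ _ _ N₂ _ _ _ N₃ _ _ _ f g hf hg hfg h₁ h₃ hJ i hi
    exact EV.middle hf hg hfg (h₁ (hJ.trans (f.annihilator_le_of_injective hf)) i hi)
      (h₃ (hJ.trans (g.annihilator_le_of_surjective hg)) i hi)

section FiniteInjectiveDimension

variable (g : ℕ) (hg : ∀ (M : Type u) [AddCommGroup M] [Module R M] [Module.Finite R M],
  ∀ i > g, EV R M R i)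
include hg

/-- If `R` has injective dimension at most `g`, then the dual of a module without higher `Ext`
into `R` has none either. The sequences `0 → M* → F* → (ΩM)* → 0` shift the degree up, starting
from the trivial range `i > g`. -/
lemma ev_dual (j : ℕ) (hj : j ≤ g) : ∀ (M : Type u) [AddCommGroup M] [Module R M]
    [Module.Finite R M], (∀ i > 0, EV R M R i) → ∀ i > j, EV R (Module.Dual R M) R i := by
  induction hj using Nat.decreasingInduction with
  | self => exact fun M _ _ _ _ i hi => hg _ i hi
  | of_succ j hlt ih =>
    intro M _ _ _ hM i hi
    obtain ⟨F, _, _, _, _, f, hf⟩ := Module.exists_finite_presentation R M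
    have hex := f.exact_subtype_ker_map
    have hK : ∀ i > 0, EV R (LinearMap.ker f) R i := fun i hi =>
      EV.left Subtype.val_injective hf hex (EV.of_projective_of_pos hi) (hM _ (by omega))
    obtain ⟨h1, h2, h3⟩ := dual_exact Subtype.val_injective hf hex (hM 1 (by omega))
    exact EV.left h1 h2 h3 (EV.of_projective_of_pos (by omega)) (ih _ hK (i + 1) (by omega))

lemma dual_eval_surjective (M : Type u) [AddCommGroup M] [Module R M]
    [Module.Finite R M] (hM : ∀ i > 0, EV R M R i) :
    Function.Surjective (Module.Dual.eval R M) := by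
  obtain ⟨F, _, _, _, _, f, hf⟩ := Module.exists_finite_presentation R M
  have hex := f.exact_subtype_ker_map
  have hK : ∀ i > 0, EV R (LinearMap.ker f) R i := fun i hi =>
    EV.left Subtype.val_injective hf hex (EV.of_projective_of_pos hi) (hM _ (by omega))
  obtain ⟨h1, h2, h3⟩ := dual_exact Subtype.val_injective hf hex (hM 1 (by omega))
  obtain ⟨-, h5, -⟩ := dual_exact h1 h2 h3 (ev_dual g hg 0 (by omega) _ hK 1 (by omega))
  intro φ
  obtain ⟨ψ, rfl⟩ := h5 φ
  obtain ⟨x, rfl⟩ := (Module.evalEquiv R F).surjective ψ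
  exact ⟨f x, rfl⟩

/-- Over a ring of finite injective dimension, a module without higher `Ext` into `R` is totally
reflexive. Injectivity of `M → M**` is a diagram chase from surjectivity of `ΩM → (ΩM)**`. -/
lemma isTotallyReflexive_of_ev (M : Type u) [AddCommGroup M] [Module R M]
    [Module.Finite R M] (hM : ∀ i > 0, EV R M R i) : IsTotallyReflexive R M := by
  refine ⟨⟨?_, dual_eval_surjective g hg M hM⟩,
    fun i hi => (extVanishes_iff_of_pos hi).2 (hM i hi),
    fun i hi => (extVanishes_iff_of_pos hi).2 (ev_dual g hg 0 (by omega) M hM i hi)⟩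
  obtain ⟨F, _, _, _, _, f, hf⟩ := Module.exists_finite_presentation R M
  have hex := f.exact_subtype_ker_map
  have hK : ∀ i > 0, EV R (LinearMap.ker f) R i := fun i hi =>
    EV.left Subtype.val_injective hf hex (EV.of_projective_of_pos hi) (hM _ (by omega))
  obtain ⟨h1, h2, h3⟩ := dual_exact Subtype.val_injective hf hex (hM 1 (by omega))
  obtain ⟨-, -, h6⟩ := dual_exact h1 h2 h3 (ev_dual g hg 0 (by omega) _ hK 1 (by omega))
  rw [injective_iff_map_eq_zero]
  intro m hm
  obtain ⟨x, rfl⟩ := hf m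
  have hx : f.dualMap.dualMap (Module.Dual.eval R F x) = 0 := hm
  obtain ⟨ψ, hψ⟩ := (h6 _).1 hx
  obtain ⟨k, rfl⟩ := dual_eval_surjective g hg _ hK ψ
  have hkx : Module.Dual.eval R F k.1 = Module.Dual.eval R F x := hψ
  rw [← (Module.evalEquiv R F).injective hkx]
  exact k.2

lemma gdimLE_of_ev (n : ℕ) : ∀ (M : Type u) [AddCommGroup M] [Module R M] [Module.Finite R M],
    (∀ i > n, EV R M R i) → GdimLE R n (ModuleCat.of R M) := by
  induction n with
  | zero => exact fun M _ _ _ hM => isTotallyReflexive_of_ev g hg M hM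
  | succ n ih =>
    intro M _ _ _ hM
    obtain ⟨F, _, _, _, _, f, hf⟩ := Module.exists_finite_presentation R M
    refine ⟨ModuleCat.of R F, ‹_›,
      isTotallyReflexive_of_ev g hg F fun i hi => EV.of_projective_of_pos hi, f, hf, ?_⟩
    exact ih (LinearMap.ker f) fun i hi =>
      EV.left Subtype.val_injective hf f.exact_subtype_ker_map
        (EV.of_projective_of_pos (by omega)) (hM (i + 1) (by omega))

end FiniteInjectiveDimension

end Gorenstein

/-! ### The invariant `P_R` modulo a regular sequence -/

section PInvariant

variable {R : Type u} [CommRing R]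

/-- Some finite bound applies to all `P_R(M, N)` with `N ∈ M^⊥`, that is, `P_R(M) < ∞`. -/
def PFinite (R : Type u) [CommRing R] (M : Type u) [AddCommGroup M] [Module R M] : Prop :=
  ∃ b : ℕ, ∀ (N : Type u) [AddCommGroup N] [Module R N] [Module.Finite R N],
    (∃ d, ∀ n ≥ d, EV R M N n) → ∀ n > b, EV R M N n

variable {M M' : Type u} [AddCommGroup M] [Module R M] [AddCommGroup M'] [Module R M']

lemma memPerp_iff {N : Type u} [AddCommGroup N] [Module R N] :
    MemPerp R M N ↔ ∃ d, ∀ n ≥ d, EV R M N n :=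
  ⟨fun ⟨d, h⟩ => ⟨d + 1, fun n hn => (extVanishes_iff_of_pos (by omega)).1 (h n (by omega))⟩,
    fun ⟨d, h⟩ => ⟨d + 1, fun n hn => (extVanishes_iff_of_pos (by omega)).2 (h n (by omega))⟩⟩

lemma PFinite.of_equiv (h : PFinite R M) (e : M ≃ₗ[R] M') : PFinite R M' := by
  obtain ⟨b, hb⟩ := h
  refine ⟨b, fun N _ _ _ ⟨d, hd⟩ n hn => (hb N ⟨d, fun n hn => ?_⟩ n hn).of_equiv e⟩
  exact (hd n hn).of_equiv e.symm

lemma pFinite_of_extPsup_lt_top (h : extPsup R M < ⊤) : PFinite R M := by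
  -- an element of `WithBot ℕ∞` below `⊤` is bounded by a natural number
  obtain ⟨b, hb⟩ : ∃ b : ℕ, extPsup R M ≤ ((b : ℕ∞) : WithBot ℕ∞) := by
    induction hx : extPsup R M with
    | bot => exact ⟨0, bot_le⟩
    | coe x =>
      rw [hx, ← WithBot.coe_top, WithBot.coe_lt_coe] at h
      obtain ⟨m, rfl⟩ := ENat.ne_top_iff_exists.1 h.ne
      exact ⟨m, le_rfl⟩
  refine ⟨b, fun N _ _ _ hd n hn => ?_⟩
  rw [← extVanishes_iff_of_pos (by omega)]
  by_contra hne
  have h1 : ((n : ℕ∞) : WithBot ℕ∞) ≤ extP R M N := le_sSup ⟨n, hne, rfl⟩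
  have h2 : extP R M N ≤ extPsup R M :=
    le_sSup ⟨N, inferInstance, inferInstance, inferInstance, memPerp_iff.2 hd, rfl⟩
  have h3 := (h1.trans h2).trans hb
  norm_cast at h3
  omega

lemma PFinite.extPsup_lt_top (h : PFinite R M) : extPsup R M < ⊤ := by
  obtain ⟨b, hb⟩ := h
  refine lt_of_le_of_lt (b := ((b : ℕ∞) : WithBot ℕ∞)) ?_ ?_
  · refine sSup_le ?_
    rintro _ ⟨N, _, _, _, hN, rfl⟩
    refine sSup_le ?_
    rintro _ ⟨n, hn, rfl⟩
    norm_cast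
    by_contra! hbn
    exact hn ((extVanishes_iff_of_pos (by omega)).2 (hb N (memPerp_iff.1 hN) n hbn))
  · rw [← WithBot.coe_top, WithBot.coe_lt_coe]
    exact ENat.natCast_lt_top b

variable [IsLocalRing R] [IsNoetherianRing R]

lemma PFinite.of_quotSMulTop [Module.Finite R M] {x : R} (hx : x ∈ maximalIdeal R)
    (hreg : IsSMulRegular M x) (h : PFinite R (QuotSMulTop x M)) : PFinite R M := by
  obtain ⟨b, hb⟩ := h
  refine ⟨b, fun N _ _ _ ⟨d, hd⟩ n hn => EV.of_quotSMulTop hx hreg (hb N ⟨d + 1, ?_⟩ _ (by omega))⟩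
  intro m hm
  obtain ⟨k, rfl⟩ : ∃ k, m = k + 1 := ⟨m - 1, by omega⟩
  exact EV.quotSMulTop hreg (hd k (by omega)) (hd (k + 1) (by omega))

lemma PFinite.of_isRegular (rs : List R) (hrs : ∀ r ∈ rs, r ∈ maximalIdeal R) :
    ∀ (M : Type u) [AddCommGroup M] [Module R M] [Module.Finite R M],
      RingTheory.Sequence.IsRegular M rs →
      PFinite R (M ⧸ (Ideal.ofList rs • ⊤ : Submodule R M)) → PFinite R M := by
  induction rs with
  | nil =>
    intro M _ _ _ _ h
    exact h.of_equiv (Submodule.quotEquivOfEqBot _ (by simp))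
  | cons x rs ih =>
    intro M _ _ _ hreg h
    obtain ⟨h1, h2⟩ := (RingTheory.Sequence.isRegular_cons_iff M x rs).1 hreg
    refine PFinite.of_quotSMulTop (hrs x (by simp)) h1
      (ih (fun r hr => hrs r (by simp [hr])) _ h2 ?_)
    exact h.of_equiv (Submodule.quotOfListConsSMulTopEquivQuotSMulTopInner M x rs)

end PInvariant

/-! ### Finite length quotients of maximal Cohen–Macaulay modules -/

/-- A finitely generated module of dimension at most zero is a module over the Artinian ring
`R / ann M`. -/
lemma isArtinian_of_supportDim_le_zero {R : Type u} [CommRing R] [IsNoetherianRing R]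
    {M : Type u} [AddCommGroup M] [Module R M] [Module.Finite R M]
    (h : Module.supportDim R M ≤ 0) : IsArtinian R M := by
  rw [Module.supportDim_eq_ringKrullDim_quotient_annihilator] at h
  have : Ring.KrullDimLE 0 (R ⧸ Module.annihilator R M) := (Order.krullDimLE_iff _ _).2 h
  let _ := Module.quotientAnnihilator (R := R) (M := M)
  have : IsScalarTower R (R ⧸ Module.annihilator R M) M := .of_algebraMap_smul fun _ _ => rfl
  have : Module.Finite (R ⧸ Module.annihilator R M) M :=
    Module.Finite.of_restrictScalars_finite R _ _
  have : IsArtinianRing (R ⧸ Module.annihilator R M) :=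
    IsNoetherianRing.isArtinianRing_of_krullDimLE_zero
  exact isArtinian_of_surjective_algebraMap (R := R ⧸ Module.annihilator R M) (S := R)
    (M := M) Ideal.Quotient.mk_surjective

/-- For a nonzero `X`, the supremum `depth X = dim R < ∞` is attained, and cutting `X` by such a
regular sequence lowers the dimension to zero. -/
lemma exists_isRegular_isArtinian {R : Type u} [CommRing R] [IsLocalRing R] [IsNoetherianRing R]
    {X : Type u} [AddCommGroup X] [Module R X] [Module.Finite R X] [Nontrivial X]
    (hX : ((rdepth R X : ℕ∞) : WithBot ℕ∞) = ringKrullDim R) :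
    ∃ rs : List R, (∀ r ∈ rs, r ∈ maximalIdeal R) ∧ RingTheory.Sequence.IsRegular X rs ∧
      IsArtinian R (X ⧸ (Ideal.ofList rs • ⊤ : Submodule R X)) := by
  have hlt : rdepth R X < ⊤ := by
    have := ringKrullDim_lt_top (R := R)
    rw [← hX, ← WithBot.coe_top, WithBot.coe_lt_coe] at this
    exact this
  have hne : Nonempty {x : ℕ∞ | ∃ rs : List R, (∀ r ∈ rs, r ∈ maximalIdeal R) ∧
      RingTheory.Sequence.IsRegular X rs ∧ x = rs.length} :=
    ⟨0, [], by simp, RingTheory.Sequence.IsRegular.nil R X, rfl⟩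
  obtain ⟨rs, hrs, hreg, hlen⟩ := ENat.sSup_mem_of_nonempty_of_lt_top hlt
  change rdepth R X = _ at hlen
  refine ⟨rs, hrs, hreg, isArtinian_of_supportDim_le_zero ?_⟩
  have h1 := Module.supportDim_add_length_eq_supportDim_of_isRegular rs hreg
  have h2 := Module.supportDim_le_ringKrullDim R X
  rw [← h1, ← hX, hlen] at h2
  induction hx : Module.supportDim R (X ⧸ (Ideal.ofList rs • ⊤ : Submodule R X)) with
  | bot => exact bot_le
  | coe x =>
    rw [hx] at h2
    have h3 : x + (rs.length : ℕ∞) ≤ 0 + (rs.length : ℕ∞) := by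
      rw [zero_add]
      exact_mod_cast h2
    exact_mod_cast (ENat.add_le_add_iff_right (ENat.natCast_ne_top _)).1 h3

/-! ### Maximal Cohen–Macaulay modules -/

/-- If every finitely generated module of finite length has finite AB-dimension, then
every maximal Cohen–Macaulay finitely generated module (one with `depth_R X = dim R`)
has finite AB-dimension. -/
theorem statement15 (R : Type u) [CommRing R] [IsLocalRing R] [IsNoetherianRing R]
    (h : ∀ (L : Type u) [AddCommGroup L] [Module R L],
      Module.Finite R L → IsArtinian R L → IsNoetherian R L → abdim R L < ⊤)
    (X : Type u) [AddCommGroup X] [Module R X] [Module.Finite R X]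
    (hX : ((rdepth R X : ℕ∞) : WithBot ℕ∞) = ringKrullDim R) :
    abdim R X < ⊤ := by
  -- `k` has finite G-dimension, so `R` has finite injective dimension
  obtain ⟨g, hg⟩ : ∃ g : ℕ, ∀ i > g, EV R (ResidueField R) R i := by
    have : Module.Finite R (ResidueField R) := inferInstance
    have : IsSimpleModule R (ResidueField R) :=
      isSimpleModule_iff_isCoatom.2 (maximalIdeal.isMaximal R).out
    have hk := h (ResidueField R) inferInstance inferInstance inferInstance
    have hk' : gdim R (ResidueField R) < ⊤ := by
      have := (max_lt_iff.1 hk).1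
      rwa [← WithBot.coe_top, WithBot.coe_lt_coe] at this
    obtain ⟨n, hn⟩ := exists_gdimLE_of_gdim_lt_top hk'
    exact ⟨n, ev_of_gdimLE n _ hn⟩
  have hR (M : Type u) [AddCommGroup M] [Module R M] [Module.Finite R M] :
      ∀ i > g, EV R M R i := ev_of_ev_residueField g hg ⊥ M bot_le
  have hG : gdim R X ≤ g := sInf_le ⟨g, gdimLE_of_ev g hR g X (hR X), rfl⟩
  have hP : PFinite R X := by
    rcases subsingleton_or_nontrivial X with hs | hs
    · exact ⟨0, fun N _ _ _ _ n _ => EV.of_subsingleton n⟩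
    · obtain ⟨rs, hrs, hreg, hart⟩ := exists_isRegular_isArtinian hX
      refine PFinite.of_isRegular rs hrs X hreg (pFinite_of_extPsup_lt_top ?_)
      exact (max_lt_iff.1 (h _ inferInstance hart inferInstance)).2
  refine max_lt ?_ hP.extPsup_lt_top
  rw [← WithBot.coe_top, WithBot.coe_lt_coe]
  exact hG.trans_lt (ENat.natCast_lt_top g)
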